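/- Let F be a maximal hke collection and let x, y be two distinct elements of ⋃F. Then x ≈ y (i.e., there exist A, D ∈ F with A − D = {x} and D − A = {y}) if and only if for every B ∈ F, x ∈ B holds exactly when y ∉ B. -/

import Mathlib

open Finset

/-- The union of a finite collection of finite sets. -/
def famUnion (Γ : Finset (Finset ℕ)) : Finset ℕ := Γ.sup id

/-- The intersection of a finite collection of finite sets
(equal to the usual intersection when the collection is nonempty). -/
def famInter (Γ : Finset (Finset ℕ)) : Finset ℕ :=
  (Γ.sup id).filter (fun x => ∀ A ∈ Γ, x ∈ A)

/-- `F` is a hereditary König–Egerváry (hke) collection with `α(F) = α`: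
`α` is a positive integer and `|⋃Γ| + |⋂Γ| = 2α` for every nonempty subcollection `Γ` of `F`. -/
def IsHKE (F : Finset (Finset ℕ)) (α : ℕ) : Prop :=
  0 < α ∧ ∀ Γ ⊆ F, Γ.Nonempty → (famUnion Γ).card + (famInter Γ).card = 2 * α

/-- `F` is a maximal hke collection: it is an hke collection and no collection
properly containing it is an hke collection. -/
def IsMaxHKE (F : Finset (Finset ℕ)) : Prop :=
  (∃ α, IsHKE F α) ∧ ∀ F' : Finset (Finset ℕ), F ⊂ F' → ¬ ∃ β, IsHKE F' β

/-- The relation `≈` on `⋃F`: `x ≈ y` iff `x = y` or there are `A, D ∈ F`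
with `A − D = {x}` and `D − A = {y}`. -/
def ApproxRel (F : Finset (Finset ℕ)) (x y : ℕ) : Prop :=
  x = y ∨ ∃ A ∈ F, ∃ D ∈ F, A \ D = {x} ∧ D \ A = {y}

/-!
If `A \ D = {x}` and `D \ A = {y}`, then adjoining `D` to `{A, B}` adds at most `y` to the union
and removes at most `x` from the intersection. The two sizes have constant sum, so `y` is new
exactly when `x` is lost, that is, `y ∉ B` exactly when `x ∈ B`.

Conversely, if every member of `F` contains exactly one of `x` and `y`, then the traces of `⋃Γ` and
`⋂Γ` on `{x, y}` have total size two for every nonempty `Γ ⊆ F`. This total is blind to which of the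
two points a member contains, so trading `x` for `y` in a member `B` of `F` yields a set that can be
adjoined to `F`. By maximality that set already belongs to `F`, and together with `B` it
witnesses `x ≈ y`.
-/

section

variable {F Γ : Finset (Finset ℕ)} {A B D : Finset ℕ} {x y z α : ℕ}

theorem mem_famUnion : z ∈ famUnion Γ ↔ ∃ A ∈ Γ, z ∈ A := by
  simp [famUnion]

theorem mem_famInter (hΓ : Γ.Nonempty) : z ∈ famInter Γ ↔ ∀ A ∈ Γ, z ∈ A := by
  obtain ⟨A, hA⟩ := hΓ
  exact mem_filter.trans <| and_iff_right_of_imp fun hz => mem_famUnion.2 ⟨A, hA, hz A hA⟩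

theorem famUnion_insert : famUnion (insert A Γ) = A ∪ famUnion Γ :=
  sup_insert

theorem mem_famInter_insert : z ∈ famInter (insert A Γ) ↔ z ∈ A ∧ ∀ C ∈ Γ, z ∈ C := by
  simp [mem_famInter]

theorem famInter_insert (hΓ : Γ.Nonempty) : famInter (insert A Γ) = A ∩ famInter Γ := by
  ext z
  rw [mem_famInter_insert, mem_inter, mem_famInter hΓ]

theorem famUnion_insert_of_sdiff_eq_singleton (hA : A ∈ Γ) (hDA : D \ A = {y}) :
    famUnion (insert D Γ) = insert y (famUnion Γ) := by
  have hAΓ : A ⊆ famUnion Γ := le_sup (f := id) hA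
  rw [famUnion_insert, ← sdiff_union_self_eq_union, insert_eq, ← hDA]
  grind

theorem famInter_insert_of_sdiff_eq_singleton (hA : A ∈ Γ) (hAD : A \ D = {x}) :
    famInter (insert D Γ) = (famInter Γ).erase x := by
  have hΓA : famInter Γ ⊆ A := fun z hz => (mem_famInter ⟨A, hA⟩).1 hz A hA
  rw [famInter_insert ⟨A, hA⟩, ← sdiff_singleton_eq_erase, ← hAD]
  grind

theorem IsHKE.mem_famUnion_iff_notMem_famInter_of_sdiff_eq_singleton (hF : IsHKE F α)
    (hΓ : Γ ⊆ F) (hA : A ∈ Γ) (hD : D ∈ F) (hAD : A \ D = {x}) (hDA : D \ A = {y}) :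
    y ∈ famUnion Γ ↔ x ∉ famInter Γ := by
  have card_eq : (insert y (famUnion Γ)).card + ((famInter Γ).erase x).card =
      (famUnion Γ).card + (famInter Γ).card := by
    rw [← famUnion_insert_of_sdiff_eq_singleton hA hDA,
      ← famInter_insert_of_sdiff_eq_singleton hA hAD,
      hF.2 _ (insert_subset hD hΓ) (insert_nonempty _ _), hF.2 _ hΓ ⟨A, hA⟩]
  by_cases hy : y ∈ famUnion Γ <;> by_cases hx : x ∈ famInter Γ
  · have card_erase_lt := card_erase_lt_of_mem hx
    rw [insert_eq_of_mem hy] at card_eq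
    omega
  · simp [hy, hx]
  · simp [hy, hx]
  · rw [card_insert_of_notMem hy, erase_eq_of_notMem hx] at card_eq
    omega

/-- Every member of `F` contains exactly one of `x` and `y`: the condition that
characterizes `x ≈ y` in a maximal hke collection. -/
def IsComplementaryPair (F : Finset (Finset ℕ)) (x y : ℕ) : Prop :=
  ∀ B ∈ F, (x ∈ B ↔ y ∉ B)

theorem IsHKE.isComplementaryPair_of_sdiff_eq_singleton (hF : IsHKE F α) (hA : A ∈ F) (hD : D ∈ F)
    (hAD : A \ D = {x}) (hDA : D \ A = {y}) : IsComplementaryPair F x y := by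
  intro B hB
  have hxA : x ∈ A := (mem_sdiff.1 (hAD ▸ mem_singleton_self x)).1
  have hyA : y ∉ A := (mem_sdiff.1 (hDA ▸ mem_singleton_self y)).2
  have hAB : {A, B} ⊆ F := insert_subset hA (singleton_subset_iff.2 hB)
  have mem_union : y ∈ famUnion {A, B} ↔ y ∈ B := by simp [mem_famUnion, hyA]
  have mem_inter : x ∈ famInter {A, B} ↔ x ∈ B := by simp [mem_famInter_insert, hxA]
  have mem_union_iff : y ∈ famUnion {A, B} ↔ x ∉ famInter {A, B} :=
    hF.mem_famUnion_iff_notMem_famInter_of_sdiff_eq_singleton hAB (mem_insert_self A {B}) hD hAD hDA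
  rw [mem_union, mem_inter] at mem_union_iff
  exact iff_not_comm.1 mem_union_iff

namespace IsComplementaryPair

theorem mono (hF : IsComplementaryPair F x y) (hΓ : Γ ⊆ F) : IsComplementaryPair Γ x y :=
  fun B hB => hF B (hΓ hB)

theorem symm (hF : IsComplementaryPair F x y) : IsComplementaryPair F y x :=
  fun B hB => iff_not_comm.1 (hF B hB)

theorem mem_famUnion_iff_notMem_famInter (hF : IsComplementaryPair F x y) (hne : F.Nonempty) :
    x ∈ famUnion F ↔ y ∉ famInter F := by
  rw [mem_famUnion, mem_famInter hne]
  push Not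
  exact exists_congr fun B => and_congr_right (hF B)

theorem card_famUnion_inter_add_card_famInter_inter (hF : IsComplementaryPair F x y)
    (hne : F.Nonempty) (hxy : x ≠ y) :
    (famUnion F ∩ {x, y}).card + (famInter F ∩ {x, y}).card = 2 := by
  have hx := hF.mem_famUnion_iff_notMem_famInter hne
  have hy := hF.symm.mem_famUnion_iff_notMem_famInter hne
  by_cases hyI : y ∈ famInter F <;> by_cases hxI : x ∈ famInter F <;>
    simp_all [inter_insert_of_mem, inter_insert_of_notMem]

theorem card_famUnion_add_card_famInter (hF : IsComplementaryPair F x y) (hne : F.Nonempty)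
    (hxy : x ≠ y) :
    (famUnion F).card + (famInter F).card =
      (famUnion F \ {x, y}).card + (famInter F \ {x, y}).card + 2 := by
  rw [← card_sdiff_add_card_inter (famUnion F) {x, y},
    ← card_sdiff_add_card_inter (famInter F) {x, y},
    ← hF.card_famUnion_inter_add_card_famInter_inter hne hxy]
  ring

end IsComplementaryPair

theorem famUnion_insert_sdiff_congr {T : Finset ℕ} (h : D \ T = B \ T) :
    famUnion (insert D Γ) \ T = famUnion (insert B Γ) \ T := by
  rw [famUnion_insert, famUnion_insert, union_sdiff_distrib, union_sdiff_distrib, h]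

theorem famInter_insert_sdiff_congr {T : Finset ℕ} (h : D \ T = B \ T) :
    famInter (insert D Γ) \ T = famInter (insert B Γ) \ T := by
  ext z
  have hz : z ∈ D ∧ z ∉ T ↔ z ∈ B ∧ z ∉ T := by rw [← mem_sdiff, h, mem_sdiff]
  rw [mem_sdiff, mem_sdiff, mem_famInter_insert, mem_famInter_insert, and_right_comm, hz,
    and_right_comm]

theorem IsHKE.insert_of_sdiff_pair_eq (hF : IsHKE F α) (hpair : IsComplementaryPair F x y)
    (hxy : x ≠ y) (hB : B ∈ F) (hD : x ∈ D ↔ y ∉ D) (hDB : D \ {x, y} = B \ {x, y}) :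
    IsHKE (insert D F) α := by
  refine ⟨hF.1, fun Γ hΓ hne => ?_⟩
  by_cases hDΓ : D ∈ Γ
  · have hG : Γ.erase D ⊆ F := subset_insert_iff.1 hΓ
    have hBG : insert B (Γ.erase D) ⊆ F := insert_subset hB hG
    have hpairD : IsComplementaryPair (insert D (Γ.erase D)) x y :=
      (forall_mem_insert _ _ _).2 ⟨hD, hpair.mono hG⟩
    rw [← insert_erase hDΓ, ← hF.2 _ hBG (insert_nonempty _ _),
      hpairD.card_famUnion_add_card_famInter (insert_nonempty _ _) hxy,
      (hpair.mono hBG).card_famUnion_add_card_famInter (insert_nonempty _ _) hxy,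
      famUnion_insert_sdiff_congr hDB, famInter_insert_sdiff_congr hDB]
  · exact hF.2 Γ ((subset_insert_iff_of_notMem hDΓ).1 hΓ) hne

theorem IsMaxHKE.mem_of_isHKE_insert (hF : IsMaxHKE F) (hD : IsHKE (insert D F) α) : D ∈ F := by
  by_contra hDF
  exact hF.2 _ (ssubset_insert hDF) ⟨α, hD⟩

theorem IsMaxHKE.insert_erase_mem (hF : IsMaxHKE F) (hpair : IsComplementaryPair F x y)
    (hxy : x ≠ y) (hB : B ∈ F) : insert y (B.erase x) ∈ F := by
  obtain ⟨α, hα⟩ := hF.1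
  refine hF.mem_of_isHKE_insert (hα.insert_of_sdiff_pair_eq hpair hxy hB ?_ ?_)
  · simp [hxy]
  · grind

end

/-- in a maximal hke collection `F`, for distinct `x, y ∈ ⋃F`, `x ≈ y` iff
for every `B ∈ F`, `x ∈ B` exactly when `y ∉ B`. -/
theorem approxRel_iff_complementary (F : Finset (Finset ℕ)) (h : IsMaxHKE F)
    (x y : ℕ) (hx : x ∈ famUnion F) (hy : y ∈ famUnion F) (hxy : x ≠ y) :
    ApproxRel F x y ↔ ∀ B ∈ F, (x ∈ B ↔ y ∉ B) := by
  constructor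
  · rintro (rfl | ⟨A, hA, D, hD, hAD, hDA⟩)
    · exact absurd rfl hxy
    · obtain ⟨α, hα⟩ := h.1
      exact hα.isComplementaryPair_of_sdiff_eq_singleton hA hD hAD hDA
  · intro hpair
    obtain ⟨B, hB, hxB⟩ := mem_famUnion.1 hx
    have hyB : y ∉ B := (hpair B hB).1 hxB
    have hswap : insert y (B.erase x) ∈ F := h.insert_erase_mem hpair hxy hB
    refine Or.inr ⟨B, hB, insert y (B.erase x), hswap, ?_, ?_⟩
    · rw [sdiff_insert_of_notMem hyB, sdiff_erase_self hxB]
    · rw [insert_sdiff_of_notMem _ hyB, sdiff_eq_empty_iff_subset.2 (erase_subset x B)]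
      simp
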